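/- arXiv:2401.10847 — 2 statements merged into one kernel-verified Lean document; each statement's English description precedes it below -/
import Mathlib

section
/- For every non-empty family 𝓕 of finite graphs, each having at least one edge, either sat(n,𝓕) → ∞ as n → ∞, or there exist an integer m and an integer N such that sat(n,𝓕) = m for all n ≥ N. -/
open SimpleGraph Filter Topology

/-- `H` (on `β`) is contained in `G` (on `α`): `G` has a subgraph isomorphic to `H`. -/
def Contains {α β : Type*} (G : SimpleGraph α) (H : SimpleGraph β) : Prop :=
  ∃ f : β ↪ α, ∀ a b : β, H.Adj a b → G.Adj (f a) (f b)

/-- A family of finite graphs, each given on a vertex set `Fin n`. -/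
abbrev GraphFam := Set ((n : ℕ) × SimpleGraph (Fin n))

/-- `G` is `𝓕`-saturated: `G` contains no member of `𝓕`, but adding any missing edge to `G`
creates a member of `𝓕`. -/
def FamSaturated (𝓕 : GraphFam) {α : Type*} (G : SimpleGraph α) : Prop :=
  (∀ F ∈ 𝓕, ¬ Contains G F.2) ∧
    ∀ u v : α, u ≠ v → ¬ G.Adj u v →
      ∃ F ∈ 𝓕, Contains (G ⊔ SimpleGraph.fromEdgeSet {s(u, v)}) F.2

/-- `sat n 𝓕` is the minimum number of edges in an `𝓕`-saturated graph on `n` vertices. -/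
noncomputable def sat (n : ℕ) (𝓕 : GraphFam) : ℕ :=
  sInf {m | ∃ G : SimpleGraph (Fin n), FamSaturated 𝓕 G ∧ Nat.card G.edgeSet = m}

theorem frequently_exists_of_finite {ι α : Type*} [Finite ι] {l : Filter α} {p : α → ι → Prop}
    (h : ∃ᶠ x in l, ∃ i, p x i) : ∃ i, ∃ᶠ x in l, p x i := by
  by_contra! hc
  exact h ((eventually_all.2 hc).mono fun x hx ⟨i, hi⟩ => hx i hi)

section Contains

variable {α β γ : Type*}

theorem Contains.trans {G : SimpleGraph α} {G' : SimpleGraph β} {F : SimpleGraph γ}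
    (h : Contains G G') (h' : Contains G' F) : Contains G F := by
  obtain ⟨f, hf⟩ := h
  obtain ⟨g, hg⟩ := h'
  exact ⟨g.trans f, fun a b hab => hf _ _ (hg _ _ hab)⟩

theorem contains_sup_edge {G : SimpleGraph α} {G' : SimpleGraph β} (f : β ↪ α)
    (hf : ∀ a b, G'.Adj a b → G.Adj (f a) (f b)) (u v : β) :
    Contains (G ⊔ fromEdgeSet {s(f u, f v)}) (G' ⊔ fromEdgeSet {s(u, v)}) := by
  refine ⟨f, fun a b hab => ?_⟩
  rw [sup_adj, fromEdgeSet_adj] at hab ⊢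
  refine hab.imp (hf a b) fun ⟨h, hne⟩ => ⟨?_, f.injective.ne hne⟩
  simpa using congrArg (Sym2.map f) h

theorem FamSaturated.comap_equiv {𝓕 : GraphFam} {G : SimpleGraph α} (hG : FamSaturated 𝓕 G)
    (σ : β ≃ α) : FamSaturated 𝓕 (G.comap σ) := by
  refine ⟨fun F hF hc => hG.1 F hF (Contains.trans ⟨σ.toEmbedding, fun _ _ h => h⟩ hc),
    fun u v huv hadj => ?_⟩
  obtain ⟨F, hF, hc⟩ := hG.2 (σ u) (σ v) (σ.injective.ne huv) hadj
  refine ⟨F, hF, Contains.trans ?_ hc⟩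
  have := contains_sup_edge (G := G.comap σ) (G' := G) σ.symm.toEmbedding (by simp) (σ u) (σ v)
  simpa using this

end Contains

theorem exists_famSaturated (𝓕 : GraphFam) (h : ∀ F ∈ 𝓕, 1 ≤ Nat.card F.2.edgeSet) (n : ℕ) :
    ∃ G : SimpleGraph (Fin n), FamSaturated 𝓕 G := by
  obtain ⟨G, hG⟩ := (Set.toFinite {G : SimpleGraph (Fin n) | ∀ F ∈ 𝓕, ¬ Contains G F.2})
    |>.exists_maximal ⟨⊥, fun F hF ⟨f, hf⟩ => by
      have hF' : F.2 = ⊥ := by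
        ext a b
        simpa using hf a b
      have := h F hF
      simp [hF'] at this⟩
  refine ⟨G, hG.prop, fun u v huv hadj => ?_⟩
  by_contra! hc
  have hle := hG.le_of_ge (y := G ⊔ fromEdgeSet {s(u, v)}) hc le_sup_left
  exact hadj (hle (by simp [huv]))

theorem sat_spec (𝓕 : GraphFam) (h : ∀ F ∈ 𝓕, 1 ≤ Nat.card F.2.edgeSet) (n : ℕ) :
    ∃ G : SimpleGraph (Fin n), FamSaturated 𝓕 G ∧ Nat.card G.edgeSet = sat n 𝓕 := by
  obtain ⟨G, hG⟩ := exists_famSaturated 𝓕 h n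
  exact Nat.sInf_mem (s := {m | ∃ G : SimpleGraph (Fin n), FamSaturated 𝓕 G ∧
    Nat.card G.edgeSet = m}) ⟨_, G, hG, rfl⟩

/-- The graph on `Fin n` obtained from `H` by adding `n - k` isolated vertices. -/
def pad {k n : ℕ} (h : k ≤ n) (H : SimpleGraph (Fin k)) : SimpleGraph (Fin n) :=
  H.map (Fin.castLEEmb h)

theorem pad_adj {k n : ℕ} (h : k ≤ n) (H : SimpleGraph (Fin k)) (u v : Fin n) :
    (pad h H).Adj u v ↔
      ∃ (hu : u.val < k) (hv : v.val < k), H.Adj ⟨u, hu⟩ ⟨v, hv⟩ := by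
  constructor
  · rintro ⟨-, a, b, hab, rfl, rfl⟩
    exact ⟨a.2, b.2, hab⟩
  · rintro ⟨hu, hv, hab⟩
    exact (map_adj_apply (f := Fin.castLEEmb h)).2 hab

theorem card_edgeSet_pad {k n : ℕ} (h : k ≤ n) (H : SimpleGraph (Fin k)) :
    Nat.card (pad h H).edgeSet = Nat.card H.edgeSet := by
  rw [pad, edgeSet_map]
  exact Nat.card_image_of_injective (Fin.castLEEmb h).sym2Map.injective _

theorem contains_pad_pad {k n n' : ℕ} (h : k ≤ n) (h' : k ≤ n') (hn : n ≤ n')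
    (H : SimpleGraph (Fin k)) : Contains (pad h' H) (pad h H) :=
  ⟨Fin.castLEEmb hn, fun a b hab => by simpa [pad_adj] using hab⟩

/-- A permutation fixing `{x | x < k}` and sending the pair `(a, b)` to `(u, v)`. -/
theorem exists_perm_extending_pair {n : ℕ} (k : ℕ) {a b u v : Fin n} (hab : a ≠ b) (huv : u ≠ v)
    (hau : a = u ∨ k ≤ a.val ∧ k ≤ u.val) (hbv : b = v ∨ k ≤ b.val ∧ k ≤ v.val) :
    ∃ π : Equiv.Perm (Fin n), π a = u ∧ π b = v ∧ ∀ x : Fin n, x.val < k → π x = x := by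
  refine ⟨(Equiv.swap a u).trans (Equiv.swap (Equiv.swap a u b) v), ?_, ?_, fun x hx => ?_⟩
  · have : u ≠ Equiv.swap a u b := fun h => hab <| by simpa using congrArg (Equiv.swap a u) h
    simp [Equiv.swap_apply_of_ne_of_ne this huv]
  · simp
  · simp only [Equiv.trans_apply, Equiv.swap_apply_def]
    grind

theorem famSaturated_pad_of_le {𝓕 : GraphFam} {k n n' : ℕ} (H : SimpleGraph (Fin k))
    (hk : k + 2 ≤ n) (hn : n ≤ n') (hsat : FamSaturated 𝓕 (pad (by lia : k ≤ n) H))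
    (hfree : ∀ F ∈ 𝓕, ¬ Contains (pad (by lia : k ≤ n') H) F.2) :
    FamSaturated 𝓕 (pad (by lia : k ≤ n') H) := by
  refine ⟨hfree, fun u v huv hadj => ?_⟩
  have hne : u.val ≠ v.val := Fin.val_ne_of_ne huv
  let a : Fin n := ⟨if u.val < k then u else k, by split <;> lia⟩
  let b : Fin n := ⟨if v.val < k then v else k + 1, by split <;> lia⟩
  have hab : a ≠ b := by
    simp only [a, b, ne_eq, Fin.mk.injEq]
    split <;> split <;> lia
  obtain ⟨π, hπa, hπb, hπ⟩ := exists_perm_extending_pair k (a := Fin.castLE hn a)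
    (b := Fin.castLE hn b) (u := u) (v := v) ((Fin.castLE_injective hn).ne hab) huv
    (by by_cases h : u.val < k <;> simp [a, h, Fin.ext_iff]; lia)
    (by by_cases h : v.val < k <;> simp [b, h, Fin.ext_iff]; lia)
  let g : Fin n ↪ Fin n' := (Fin.castLEEmb hn).trans π.toEmbedding
  have hga : g a = u := hπa
  have hgb : g b = v := hπb
  have hgx : ∀ x : Fin n, x.val < k → (g x).val = x.val := fun x hx =>
    congrArg Fin.val (hπ (Fin.castLE hn x) hx)
  have hg : ∀ x y, (pad (by lia : k ≤ n) H).Adj x y →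
      (pad (by lia : k ≤ n') H).Adj (g x) (g y) := by
    intro x y hxy
    rw [pad_adj] at hxy ⊢
    obtain ⟨hx, hy, hxy⟩ := hxy
    simpa only [hgx x hx, hgx y hy] using ⟨hx, hy, hxy⟩
  have hnadj : ¬ (pad (by lia : k ≤ n) H).Adj a b := fun h => hadj (hga ▸ hgb ▸ hg a b h)
  obtain ⟨F, hF, hc⟩ := hsat.2 a b hab hnadj
  exact ⟨F, hF, Contains.trans (hga ▸ hgb ▸ contains_sup_edge g hg a b) hc⟩

theorem ncard_support_le {α : Type*} [Finite α] (G : SimpleGraph α) :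
    G.support.ncard ≤ 2 * Nat.card G.edgeSet := by
  classical
  have := Fintype.ofFinite α
  have hsub : G.support ⊆ (G.edgeFinset.biUnion Sym2.toFinset : Finset α) := by
    rintro v ⟨w, hvw⟩
    simp only [Finset.coe_biUnion, Set.mem_iUnion]
    exact ⟨s(v, w), by simpa using hvw, by simp⟩
  calc G.support.ncard ≤ (G.edgeFinset.biUnion Sym2.toFinset).card := by
        rw [← Set.ncard_coe_finset]
        exact Set.ncard_le_ncard hsub
    _ ≤ G.edgeFinset.card * 2 := Finset.card_biUnion_le_card_mul _ _ _ fun e _ => by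
        rw [Sym2.card_toFinset]
        split <;> lia
    _ = 2 * Nat.card G.edgeSet := by
        rw [Nat.card_eq_fintype_card, ← edgeFinset_card, mul_comm]

theorem exists_comap_equiv_eq_pad {k n : ℕ} (h : k ≤ n) (G : SimpleGraph (Fin n))
    (hG : G.support.ncard ≤ k) :
    ∃ (σ : Fin n ≃ Fin n) (H : SimpleGraph (Fin k)), G.comap σ = pad h H := by
  classical
  obtain ⟨T, hT, -, hTk⟩ := Set.exists_subsuperset_card_eq (Set.subset_univ G.support) hG
    (by simpa using h)
  have hcard : Fintype.card {x : Fin n // x.val < k} = Fintype.card {x : Fin n // x ∈ T} := by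
    rw [← Nat.card_eq_fintype_card, ← Nat.card_eq_fintype_card]
    refine Eq.trans ?_ hTk.symm
    rw [Nat.card_congr (Fin.castLEquiv h).symm]
    simp
  let e := Fintype.equivOfCardEq hcard
  let σ := e.extendSubtype
  have hσ : ∀ x y, G.Adj (σ x) (σ y) → x.val < k := by
    intro x y hxy
    by_contra hx
    exact e.extendSubtype_not_mem x hx (hT ⟨_, hxy⟩)
  refine ⟨σ, G.comap (σ ∘ Fin.castLE h), ?_⟩
  ext x y
  rw [pad_adj]
  exact ⟨fun hxy => ⟨hσ x y hxy, hσ y x hxy.symm, hxy⟩, fun ⟨_, _, hxy⟩ => hxy⟩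

theorem exists_famSaturated_pad {𝓕 : GraphFam} {k n : ℕ} (h : k ≤ n) {G : SimpleGraph (Fin n)}
    (hG : FamSaturated 𝓕 G) (hk : 2 * Nat.card G.edgeSet ≤ k) :
    ∃ H : SimpleGraph (Fin k), FamSaturated 𝓕 (pad h H) ∧
      Nat.card H.edgeSet = Nat.card G.edgeSet := by
  obtain ⟨σ, H, hσ⟩ := exists_comap_equiv_eq_pad h G ((ncard_support_le G).trans hk)
  refine ⟨H, hσ ▸ hG.comap_equiv σ, ?_⟩
  rw [← card_edgeSet_pad h, ← hσ]
  exact Nat.card_congr (Iso.comap σ G).mapEdgeSet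

/-- A value attained by `sat` infinitely often is an upper bound for `sat` eventually. -/
theorem eventually_sat_le {𝓕 : GraphFam} (h : ∀ F ∈ 𝓕, 1 ≤ Nat.card F.2.edgeSet) {m : ℕ}
    (hm : ∃ᶠ n in atTop, sat n 𝓕 = m) : ∀ᶠ n in atTop, sat n 𝓕 ≤ m := by
  have hex : ∃ᶠ n in atTop, ∃ H : SimpleGraph (Fin (2 * m)), ∃ hn : 2 * m ≤ n,
      FamSaturated 𝓕 (pad hn H) ∧ Nat.card H.edgeSet = m := by
    refine (hm.and_eventually (eventually_ge_atTop (2 * m))).mono fun n ⟨hnm, hn⟩ => ?_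
    obtain ⟨G, hG, hcard⟩ := sat_spec 𝓕 h n
    obtain ⟨H, hH, hHcard⟩ := exists_famSaturated_pad hn hG (by lia)
    exact ⟨H, hn, hH, by lia⟩
  obtain ⟨H, hH⟩ := frequently_exists_of_finite hex
  rw [frequently_atTop] at hH
  obtain ⟨n₀, hn₀, hn₀', hsat, hcard⟩ := hH (2 * m + 2)
  refine (eventually_ge_atTop n₀).mono fun n hn => ?_
  obtain ⟨n₁, hn₁, hn₁', hsat₁, -⟩ := hH n
  have hfree : ∀ F ∈ 𝓕, ¬ Contains (pad (hn₀'.trans hn) H) F.2 := fun F hF hc =>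
    hsat₁.1 F hF ((contains_pad_pad _ _ hn₁ H).trans hc)
  exact Nat.sInf_le ⟨_, famSaturated_pad_of_le H hn₀ hn hsat hfree,
    (card_edgeSet_pad _ H).trans hcard⟩

/-- For every non-empty family `𝓕` of graphs each having at least one edge, `sat(n,𝓕)` either
tends to infinity or is eventually constant. -/
theorem stmt4 (𝓕 : GraphFam) (h1 : 𝓕.Nonempty) (h2 : ∀ F ∈ 𝓕, 1 ≤ Nat.card F.2.edgeSet) :
    Tendsto (fun n => sat n 𝓕) atTop atTop ∨ ∃ m N : ℕ, ∀ n, N ≤ n → sat n 𝓕 = m := by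
  classical
  by_cases hex : ∃ m, ∃ᶠ n in atTop, sat n 𝓕 = m
  · right
    refine ⟨Nat.find hex, ?_⟩
    have hge : ∀ᶠ n in atTop, ∀ j : Fin (Nat.find hex), sat n 𝓕 ≠ j :=
      eventually_all.2 fun j => not_frequently.1 (Nat.find_min hex j.2)
    rw [← eventually_atTop]
    filter_upwards [eventually_sat_le h2 (Nat.find_spec hex), hge] with n hle hge
    exact hle.antisymm (not_lt.1 fun hlt => hge ⟨_, hlt⟩ rfl)
  · left
    refine tendsto_atTop.2 fun b => ?_
    by_contra hb
    have hfreq : ∃ᶠ n in atTop, ∃ j : Fin b, sat n 𝓕 = j :=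
      (not_eventually.1 hb).mono fun n hn => ⟨⟨_, not_le.1 hn⟩, rfl⟩
    obtain ⟨j, hj⟩ := frequently_exists_of_finite hfreq
    exact hex ⟨j, hj⟩
end

section
/- For every integer m ≥ 0 there exists a finite non-empty family 𝓕 of finite graphs, each having at least one edge, such that sat(n,𝓕) = m for all sufficiently large integers n. -/
open SimpleGraph Filter Topology

/-- All graphs on `2 * (m + 1)` vertices with more than `m` edges. -/
def manyEdges (m : ℕ) : GraphFam :=
  {F | F.1 = 2 * (m + 1) ∧ m < Nat.card F.2.edgeSet}

theorem finite_manyEdges (m : ℕ) : (manyEdges m).Finite := by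
  refine (Set.finite_range
    (fun H : SimpleGraph (Fin (2 * (m + 1))) ↦
      (⟨_, H⟩ : (n : ℕ) × SimpleGraph (Fin n)))).subset ?_
  rintro ⟨n, H⟩ ⟨rfl, -⟩
  exact ⟨H, rfl⟩

theorem Contains.card_edgeSet_le {α β : Type*} [Finite α] {G : SimpleGraph α}
    {H : SimpleGraph β} (h : Contains G H) : Nat.card H.edgeSet ≤ Nat.card G.edgeSet := by
  obtain ⟨f, hf⟩ := h
  let φ : H →g G := ⟨f, fun {a b} ↦ hf a b⟩
  exact Nat.card_le_card_of_injective φ.mapEdgeSet (Hom.mapEdgeSet.injective φ f.injective)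

/-- On enough vertices, having more than `m` edges is the same as containing a small graph with
more than `m` edges. -/
theorem exists_mem_manyEdges_contains_iff {m n : ℕ} (hn : 2 * (m + 1) ≤ n)
    (G : SimpleGraph (Fin n)) :
    (∃ F ∈ manyEdges m, Contains G F.2) ↔ m < Nat.card G.edgeSet := by
  classical
  refine ⟨fun ⟨F, hF, hG⟩ ↦ hF.2.trans_le hG.card_edgeSet_le, fun h ↦ ?_⟩
  rw [Nat.card_eq_fintype_card, ← edgeFinset_card] at h
  obtain ⟨s, hsG, hs⟩ := Finset.exists_subset_card_eq (Nat.succ_le_of_lt h)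
  have hcard : (s.biUnion Sym2.toFinset).card ≤ 2 * (m + 1) := by
    have := Finset.card_biUnion_le_card_mul s Sym2.toFinset 2 fun e _ ↦ by
      rw [Sym2.card_toFinset]; split_ifs <;> simp
    omega
  obtain ⟨t, hst, ht⟩ := Finset.exists_superset_card_eq hcard (by simpa using hn)
  let e := t.orderEmbOfFin ht
  refine ⟨⟨_, G.comap e⟩, ⟨rfl, ?_⟩, e.toEmbedding, fun _ _ hab ↦ hab⟩
  have hsub : s ⊆ (G.comap e).edgeFinset.image (Sym2.map e) := by
    intro x hx
    have hxt : ∀ a ∈ x, a ∈ Set.range e := fun a ha ↦ by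
      rw [Finset.range_orderEmbOfFin]
      exact hst (Finset.mem_biUnion.2 ⟨x, hx, Sym2.mem_toFinset.2 ha⟩)
    have hxG := mem_edgeFinset.1 (hsG hx)
    induction x with
    | _ a b =>
      obtain ⟨a, rfl⟩ := hxt a (Sym2.mem_mk_left _ _)
      obtain ⟨b, rfl⟩ := hxt b (Sym2.mem_mk_right _ _)
      exact Finset.mem_image.2 ⟨s(a, b), mem_edgeFinset.2 hxG, rfl⟩
  have := (Finset.card_le_card hsub).trans Finset.card_image_le
  rw [hs, edgeFinset_card, ← Nat.card_eq_fintype_card] at this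
  exact this

theorem lt_card_edgeSet_top {m n : ℕ} (hn : 2 * (m + 1) ≤ n) :
    m < Nat.card (⊤ : SimpleGraph (Fin n)).edgeSet := by
  rw [Nat.card_eq_fintype_card, ← edgeFinset_card, card_edgeFinset_top_eq_card_choose_two,
    Fintype.card_fin]
  obtain ⟨k, rfl⟩ := Nat.exists_eq_add_of_le' (show 1 ≤ n by omega)
  rw [Nat.choose_succ_succ' k 1, Nat.choose_one_right]
  omega

theorem card_edgeSet_sup_fromEdgeSet {α : Type*} [Finite α] {G : SimpleGraph α} {u v : α}
    (huv : u ≠ v) (h : ¬ G.Adj u v) :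
    Nat.card (G ⊔ SimpleGraph.fromEdgeSet {s(u, v)}).edgeSet = Nat.card G.edgeSet + 1 := by
  classical
  have := Fintype.ofFinite α
  have := G.card_edgeFinset_sup_edge h huv
  simp only [edgeFinset_card, ← Nat.card_eq_fintype_card] at this
  exact this

theorem famSaturated_manyEdges_iff {m n : ℕ} (hn : 2 * (m + 1) ≤ n) (G : SimpleGraph (Fin n)) :
    FamSaturated (manyEdges m) G ↔ Nat.card G.edgeSet = m := by
  simp only [FamSaturated, exists_mem_manyEdges_contains_iff hn]
  have hfree : (∀ F ∈ manyEdges m, ¬ Contains G F.2) ↔ Nat.card G.edgeSet ≤ m := by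
    rw [← not_lt, ← exists_mem_manyEdges_contains_iff hn]
    push Not
    rfl
  rw [hfree]
  constructor
  · rintro ⟨hle, hadd⟩
    have hne : G ≠ ⊤ := by
      rintro rfl
      exact (lt_card_edgeSet_top hn).not_ge hle
    obtain ⟨u, v, huv, h⟩ := ne_top_iff_exists_not_adj.1 hne
    have := hadd u v huv h
    rw [card_edgeSet_sup_fromEdgeSet huv h] at this
    omega
  · intro hG
    refine ⟨hG.le, fun u v huv h ↦ ?_⟩
    rw [card_edgeSet_sup_fromEdgeSet huv h]
    omega

theorem exists_card_edgeSet_eq {m n : ℕ} (hn : 2 * (m + 1) ≤ n) :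
    ∃ G : SimpleGraph (Fin n), Nat.card G.edgeSet = m := by
  obtain ⟨s, hs, hcard⟩ := Set.exists_subset_card_eq (lt_card_edgeSet_top hn).le
  refine ⟨fromEdgeSet s, ?_⟩
  have : (fromEdgeSet s).edgeSet = s := by
    rw [edgeSet_fromEdgeSet, sdiff_eq_left, Set.disjoint_left]
    exact fun e he ↦ not_isDiag_of_mem_edgeSet _ (hs he)
  rw [this, Nat.card_coe_set_eq, hcard]

/-- For every integer `m ≥ 0` there is a finite non-empty family `𝓕` of graphs, each having at
least one edge, with `sat(n,𝓕) = m` for all sufficiently large `n`. -/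
theorem stmt5 (m : ℕ) :
    ∃ 𝓕 : GraphFam, 𝓕.Finite ∧ 𝓕.Nonempty ∧ (∀ F ∈ 𝓕, 1 ≤ Nat.card F.2.edgeSet) ∧
      ∀ᶠ n : ℕ in atTop, sat n 𝓕 = m := by
  refine ⟨manyEdges m, finite_manyEdges m, ⟨⟨_, ⊤⟩, rfl, lt_card_edgeSet_top le_rfl⟩,
    fun F hF ↦ (Nat.zero_le m).trans_lt hF.2, ?_⟩
  filter_upwards [eventually_ge_atTop (2 * (m + 1))] with n hn
  obtain ⟨G, hG⟩ := exists_card_edgeSet_eq hn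
  have : {k | ∃ G : SimpleGraph (Fin n), FamSaturated (manyEdges m) G ∧
      Nat.card G.edgeSet = k} = {m} := by
    ext k
    simp only [famSaturated_manyEdges_iff hn, Set.mem_ofPred_eq, Set.mem_singleton_iff]
    exact ⟨fun ⟨_, h, hk⟩ ↦ hk.symm.trans h, fun hk ↦ ⟨G, hG, hG.trans hk.symm⟩⟩
  rw [sat, this, csInf_singleton]
end
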